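/- Let G be a group, K a normal subgroup of G, and N ∈ ℕ ∪ {∞}. If the bounded cohomology H^n_b(K; ℝ) vanishes for all 0 < n < N, then the inflation map H^n_b(G/K; ℝ) → H^n_b(G; ℝ) is an isomorphism for all 0 ≤ n < N. -/

import Mathlib

/-- A real-valued function is bounded. -/
def IsBddFun {α : Type*} (f : α → ℝ) : Prop := ∃ C : ℝ, ∀ x, |f x| ≤ C

/-- A homogeneous cochain is `G`-invariant. -/
def IsInvCochain {G : Type*} [Group G] {n : ℕ} (c : (Fin n → G) → ℝ) : Prop :=
  ∀ (g : G) (x : Fin n → G), c (fun i => g * x i) = c x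

/-- The simplicial coboundary on homogeneous cochains. -/
noncomputable def gcoboundary {G : Type*} [Group G] {n : ℕ}
    (c : (Fin n → G) → ℝ) : (Fin (n + 1) → G) → ℝ :=
  fun x => ∑ i : Fin (n + 1), (-1 : ℝ) ^ (i : ℕ) * c (x ∘ i.succAbove)

/-- Inflation of a cochain along the quotient map `G → G ⧸ K`. -/
def inflate {G : Type*} [Group G] (K : Subgroup G) [K.Normal] {n : ℕ}
    (c : (Fin n → G ⧸ K) → ℝ) : (Fin n → G) → ℝ :=
  fun x => c (fun i => QuotientGroup.mk (x i))

/-!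
Consider the double complex of bounded `G`-invariant functions of a simplex over `G ⧸ K` and a
simplex over `G`, including the augmentation degree in each variable. Fixing the simplex over
`G ⧸ K`, if it is nonempty, leaves a row that is induced from the complex of bounded `K`-invariant
functions on `G`, which computes `H^•_b(K; ℝ)`. Hence the rows are exact in the degrees where this
cohomology vanishes. The primitives in the infinitely many rows must be bounded by a common
constant, and the open mapping theorem provides one.

A zigzag along the exact rows therefore extends a cochain `b` on the edge over `G` to a primitive
`β` of a given total cocycle `Φ`. If `c` is a cocycle of `G ⧸ K` whose inflation is the coboundary
of `b`, take `Φ` to be the pullback of `c` to the join of both simplices: then `β` restricts on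
the other edge to a primitive of `c`. If `b` is a cocycle of `G`, take `Φ = 0`: then `β` restricts
on the other edge to a cocycle of `G ⧸ K`, whose inflation differs from `b` by the coboundary that
the prism homotopy between the two edges yields.
-/

/-- An extended cochain of all degrees at once on the full simplex over `A`: its value on lists of
length `n` is the component of degree `n - 1`, the empty list carrying the augmentation degree.
Lists, rather than tuples `Fin n → A`, let the coboundary be expanded along the first vertex. -/
abbrev ListCochain (A : Type*) := List A → ℝ

/-- A double cochain, on pairs of simplices over `B` and over `A`, with the same degree convention
as `ListCochain` in each variable. Fixing the `B`-simplex gives a row. -/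
abbrev ListBicochain (B A : Type*) := List B → List A → ℝ

namespace ListCochain

variable {A B : Type*}

/-- The simplicial coboundary `∑ i, (-1) ^ i * f (a₀, …, âᵢ, …, aₙ)`, in recursive form. -/
noncomputable def coboundary : ListCochain A → List A → ℝ
  | _, [] => 0
  | f, a :: l => f l - coboundary (fun w => f (a :: w)) l

lemma coboundary_zero (l : List A) : coboundary (fun _ => 0) l = 0 := by
  induction l with
  | nil => rfl
  | cons a l ih => simp only [coboundary, ih, sub_zero]

lemma coboundary_add (f g : ListCochain A) (l : List A) :
    coboundary (fun w => f w + g w) l = coboundary f l + coboundary g l := by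
  induction l generalizing f g with
  | nil => simp only [coboundary, add_zero]
  | cons a l ih => simp only [coboundary, ih]; ring

lemma coboundary_sub (f g : ListCochain A) (l : List A) :
    coboundary (fun w => f w - g w) l = coboundary f l - coboundary g l := by
  induction l generalizing f g with
  | nil => simp only [coboundary, sub_zero]
  | cons a l ih => simp only [coboundary, ih]; ring

lemma coboundary_const_mul (r : ℝ) (f : ListCochain A) (l : List A) :
    coboundary (fun w => r * f w) l = r * coboundary f l := by
  induction l generalizing f with
  | nil => simp only [coboundary, mul_zero]
  | cons a l ih => simp only [coboundary, ih]; ring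

lemma coboundary_coboundary (f : ListCochain A) (l : List A) : coboundary (coboundary f) l = 0 := by
  induction l generalizing f with
  | nil => rfl
  | cons a l ih => simp only [coboundary, coboundary_sub, ih, sub_zero, sub_self]

lemma coboundary_congr {f g : ListCochain A} {l : List A}
    (h : ∀ w : List A, w.length + 1 = l.length → f w = g w) : coboundary f l = coboundary g l := by
  induction l generalizing f g with
  | nil => rfl
  | cons a l ih =>
    simp only [coboundary]
    rw [h l rfl, ih fun w hw => h (a :: w) (congrArg (· + 1) hw)]

lemma coboundary_map (φ : A → B) (f : ListCochain B) (l : List A) :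
    coboundary f (l.map φ) = coboundary (fun w => f (w.map φ)) l := by
  induction l generalizing f with
  | nil => rfl
  | cons a l ih => simp only [coboundary, List.map_cons, ih]

lemma abs_coboundary_le {f : ListCochain A} {C : ℝ} {l : List A}
    (h : ∀ w : List A, w.length + 1 = l.length → |f w| ≤ C) :
    |coboundary f l| ≤ l.length * C := by
  induction l generalizing f with
  | nil => simp [coboundary]
  | cons a l ih =>
    have head := h l rfl
    have tail := ih fun w hw => h (a :: w) (congrArg (· + 1) hw)
    have triangle := abs_sub (f l) (coboundary (fun w => f (a :: w)) l)
    simp only [coboundary, List.length_cons, Nat.cast_succ]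
    linarith

lemma coboundary_comm (f : ListBicochain B A) (x : List B) (y : List A) :
    coboundary (fun v => coboundary (fun w => f w v) x) y =
      coboundary (fun w => coboundary (f w) y) x := by
  induction x generalizing f with
  | nil => simp only [coboundary, coboundary_zero]
  | cons b x ih => simp only [coboundary, coboundary_sub, ih fun w => f (b :: w)]

/-- Invariance under the diagonal action of `Γ` on simplices. -/
def IsInvariant (Γ : Type*) [SMul Γ A] (f : ListCochain A) : Prop :=
  ∀ (g : Γ) (l : List A), f (l.map (g • ·)) = f l

end ListCochain

namespace ListBicochain

open ListCochain

variable {A B : Type*}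

/-- The total coboundary of a double cochain: the simplicial coboundary of the join of both
simplices, so that the `A`-direction carries the sign `(-1) ^ x.length`. -/
noncomputable def totalCoboundary : ListBicochain B A → List B → List A → ℝ
  | f, [], y => coboundary (f []) y
  | f, b :: x, y => f x y - totalCoboundary (fun w => f (b :: w)) x y

lemma totalCoboundary_eq (f : ListBicochain B A) (x : List B) (y : List A) :
    totalCoboundary f x y =
      coboundary (fun w => f w y) x + (-1) ^ x.length * coboundary (f x) y := by
  induction x generalizing f with
  | nil => simp only [coboundary, totalCoboundary, List.length_nil, pow_zero, one_mul, zero_add]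
  | cons b x ih => simp only [coboundary, totalCoboundary, ih, List.length_cons, pow_succ]; ring

lemma totalCoboundary_nil_right (f : ListBicochain B A) (x : List B) :
    totalCoboundary f x [] = coboundary (fun w => f w []) x := by
  simp only [totalCoboundary_eq, coboundary, mul_zero, add_zero]

lemma totalCoboundary_zero (x : List B) (y : List A) :
    totalCoboundary (fun _ _ => 0) x y = 0 := by
  simp only [totalCoboundary_eq, coboundary_zero, mul_zero, add_zero]

/-- The double cochain `f (x₀, …, xₚ, π y₀, …, π y_q)` pulled back from the join of the simplices
`x` and `π y`. -/
def join (π : A → B) (f : ListCochain B) : ListBicochain B A := fun x y => f (x ++ y.map π)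

lemma totalCoboundary_join (π : A → B) (f : ListCochain B) (x : List B) (y : List A) :
    totalCoboundary (join π f) x y = join π (coboundary f) x y := by
  induction x generalizing f with
  | nil => exact (coboundary_map π f y).symm
  | cons b x ih => exact congrArg (f (x ++ y.map π) - ·) (ih fun w => f (b :: w))

/-- The prism operator `∑ i, (-1) ^ i * f (π a₀, …, π aᵢ) (aᵢ, …, aₙ)`, in recursive form. It is a
chain homotopy between restriction to the two edges of the double complex. -/
noncomputable def prism (π : A → B) : ListBicochain B A → List A → ℝ
  | _, [] => 0
  | f, a :: y => f [π a] (a :: y) - prism π (fun w => f (π a :: w)) y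

lemma prism_sub (π : A → B) (f g : ListBicochain B A) (y : List A) :
    prism π (fun v w => f v w - g v w) y = prism π f y - prism π g y := by
  induction y generalizing f g with
  | nil => simp only [prism, sub_zero]
  | cons a y ih => simp only [prism, ih]; ring

lemma coboundary_prism_add_prism_totalCoboundary (π : A → B) (f : ListBicochain B A) (y : List A) :
    coboundary (prism π f) y + prism π (totalCoboundary f) y = f [] y - f (y.map π) [] := by
  induction y generalizing f with
  | nil => simp only [prism, coboundary, List.map_nil, sub_self, add_zero]
  | cons a y ih =>
    have tail := ih fun w => f (π a :: w)
    simp only [prism, coboundary, totalCoboundary, coboundary_sub, prism_sub, List.map_cons]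
      at tail ⊢
    linarith

lemma abs_prism_le (π : A → B) {f : ListBicochain B A} {C : ℝ} {y : List A}
    (h : ∀ x w, x.length + w.length = y.length + 1 → |f x w| ≤ C) :
    |prism π f y| ≤ y.length * C := by
  induction y generalizing f with
  | nil => simp [prism]
  | cons a y ih =>
    have head := h [π a] (a :: y) (add_comm _ _)
    have tail := ih (f := fun w => f (π a :: w)) fun x w hxw =>
      h (π a :: x) w (by simp only [List.length_cons]; lia)
    have triangle := abs_sub (f [π a] (a :: y)) (prism π (fun w => f (π a :: w)) y)
    simp only [prism, List.length_cons, Nat.cast_succ]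
    linarith

lemma prism_eq_zero (π : A → B) {f : ListBicochain B A} {y : List A}
    (h : ∀ x w, x.length + w.length = y.length + 1 → f x w = 0) : prism π f y = 0 := by
  have bound := abs_prism_le π (C := 0) fun x w hxw => (abs_eq_zero.mpr (h x w hxw)).le
  rwa [mul_zero, abs_nonpos_iff] at bound

/-- Invariance under the diagonal action of `Γ` on pairs of simplices. -/
def IsInvariant (Γ : Type*) [SMul Γ A] [SMul Γ B] (f : ListBicochain B A) : Prop :=
  ∀ (g : Γ) (x : List B) (y : List A), f (x.map (g • ·)) (y.map (g • ·)) = f x y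

section Equivariance

variable {Γ : Type*} [SMul Γ A] [SMul Γ B] {π : A → B}

lemma isInvariant_join {f : ListCochain B} (hf : f.IsInvariant Γ)
    (hπ : ∀ (g : Γ) (a : A), π (g • a) = g • π a) : (join π f).IsInvariant Γ := by
  intro g x y
  refine Eq.trans ?_ (hf g (x ++ y.map π))
  simp only [join, List.map_append, List.map_map, Function.comp_def, hπ]

lemma prism_map_smul (f : ListBicochain B A) (hπ : ∀ (g : Γ) (a : A), π (g • a) = g • π a)
    (g : Γ) (y : List A) :
    prism π f (y.map (g • ·)) = prism π (fun x w => f (x.map (g • ·)) (w.map (g • ·))) y := by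
  induction y generalizing f with
  | nil => rfl
  | cons a y ih => simp only [prism, List.map_cons, List.map_nil, ih, hπ]

lemma isInvariant_prism {f : ListBicochain B A} (hf : f.IsInvariant Γ)
    (hπ : ∀ (g : Γ) (a : A), π (g • a) = g • π a) :
    ListCochain.IsInvariant Γ (prism π f) := by
  intro g y
  rw [prism_map_smul f hπ]
  exact congrArg (prism π · y) (funext₂ (hf g))

end Equivariance

end ListBicochain

section Tuples

open ListCochain

lemma exists_eq_ofFn {A : Type*} {n : ℕ} {l : List A} (h : l.length = n) :
    ∃ x : Fin n → A, l = List.ofFn x := by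
  subst h
  exact ⟨l.get, l.ofFn_get.symm⟩

/-- The extension by zero of a cochain of a single degree. -/
noncomputable def toListCochain {A : Type*} {n : ℕ} (c : (Fin n → A) → ℝ) : ListCochain A :=
  Function.extend List.ofFn c fun _ => 0

@[simp]
lemma toListCochain_ofFn {A : Type*} {n : ℕ} (c : (Fin n → A) → ℝ) (x : Fin n → A) :
    toListCochain c (List.ofFn x) = c x :=
  List.ofFn_injective.extend_apply c _ x

lemma toListCochain_of_length_ne {A : Type*} {n : ℕ} (c : (Fin n → A) → ℝ) {l : List A}
    (h : l.length ≠ n) : toListCochain c l = 0 :=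
  Function.extend_apply' c _ l fun ⟨_, hx⟩ => h (hx ▸ List.length_ofFn)

lemma abs_toListCochain_le {A : Type*} {n : ℕ} {c : (Fin n → A) → ℝ} {C : ℝ}
    (hc : ∀ x, |c x| ≤ C) {l : List A} (hl : l.length = n) : |toListCochain c l| ≤ C := by
  obtain ⟨x, rfl⟩ := exists_eq_ofFn hl
  exact (toListCochain_ofFn c x).symm ▸ hc x

variable {G : Type*} [Group G] {n : ℕ}

lemma gcoboundary_add (c d : (Fin n → G) → ℝ) :
    gcoboundary (c + d) = gcoboundary c + gcoboundary d := by
  funext x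
  simp only [gcoboundary, Pi.add_apply, mul_add, Finset.sum_add_distrib]

lemma gcoboundary_smul (r : ℝ) (c : (Fin n → G) → ℝ) :
    gcoboundary (r • c) = r • gcoboundary c := by
  funext x
  simp only [gcoboundary, Pi.smul_apply, smul_eq_mul, Finset.mul_sum, mul_left_comm]

lemma gcoboundary_comp_ofFn (f : ListCochain G) :
    gcoboundary (f ∘ List.ofFn (n := n)) = coboundary f ∘ List.ofFn := by
  funext y
  induction n generalizing f with
  | zero => simp [gcoboundary, coboundary]
  | succ n ih =>
    have tail := ih (fun w => f (y 0 :: w)) (y ∘ Fin.succ)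
    rw [Function.comp_apply, List.ofFn_succ, coboundary]
    refine Eq.trans ?_ (congrArg (f (List.ofFn (y ∘ Fin.succ)) - ·) tail)
    simp only [gcoboundary, Fin.sum_univ_succ (n := n + 1), sub_eq_add_neg,
      ← Finset.sum_neg_distrib]
    simp [Function.comp_def, List.ofFn_succ, pow_succ]

lemma gcoboundary_eq (c : (Fin n → G) → ℝ) :
    gcoboundary c = coboundary (toListCochain c) ∘ List.ofFn := by
  rw [← gcoboundary_comp_ofFn]
  exact congrArg gcoboundary (funext fun x => (toListCochain_ofFn c x).symm)

lemma coboundary_toListCochain {c : (Fin n → G) → ℝ} {l : List G} (hl : l.length = n + 1) :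
    coboundary (toListCochain c) l = toListCochain (gcoboundary c) l := by
  obtain ⟨x, rfl⟩ := exists_eq_ofFn hl
  rw [toListCochain_ofFn, gcoboundary_eq, Function.comp_apply]

lemma abs_gcoboundary_le {c : (Fin n → G) → ℝ} {C : ℝ} (hc : ∀ x, |c x| ≤ C)
    (x : Fin (n + 1) → G) : |gcoboundary c x| ≤ (n + 1) * C := by
  rw [gcoboundary_eq]
  refine (abs_coboundary_le fun w hw => abs_toListCochain_le hc ?_).trans_eq ?_
  · simpa using hw
  · simp

lemma isInvCochain_comp_ofFn {f : ListCochain G} (hf : f.IsInvariant G) :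
    IsInvCochain (f ∘ List.ofFn (n := n)) := by
  intro g x
  refine Eq.trans ?_ (hf g (List.ofFn x))
  rw [List.map_ofFn]
  rfl

lemma IsInvCochain.isInvariant_toListCochain {c : (Fin n → G) → ℝ} (hc : IsInvCochain c) :
    (toListCochain c).IsInvariant G := by
  intro g l
  by_cases hl : l.length = n
  · obtain ⟨x, rfl⟩ := exists_eq_ofFn hl
    rw [List.map_ofFn, toListCochain_ofFn, toListCochain_ofFn]
    exact hc g x
  · rw [toListCochain_of_length_ne c hl,
      toListCochain_of_length_ne c (by rwa [List.length_map])]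

end Tuples

section UniformPrimitives

lemma exists_preimage_mem_norm_le {𝕜 E F : Type*} [NontriviallyNormedField 𝕜]
    [NormedAddCommGroup E] [NormedSpace 𝕜 E] [CompleteSpace E]
    [NormedAddCommGroup F] [NormedSpace 𝕜 F] [CompleteSpace F]
    (T : E →L[𝕜] F) (S : ClosedSubmodule 𝕜 E) (Z : ClosedSubmodule 𝕜 F)
    (hT : ∀ z ∈ Z, ∃ x ∈ S, T x = z) :
    ∃ C, 0 ≤ C ∧ ∀ z ∈ Z, ∃ x ∈ S, T x = z ∧ ‖x‖ ≤ C * ‖z‖ := by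
  let P : ClosedSubmodule 𝕜 E := S ⊓ Z.comap T
  have : CompleteSpace P.toSubmodule := P.isClosed.completeSpace_coe
  have : CompleteSpace Z.toSubmodule := Z.isClosed.completeSpace_coe
  let T' : P.toSubmodule →L[𝕜] Z.toSubmodule :=
    (T.comp P.toSubmodule.subtypeL).codRestrict Z.toSubmodule fun x => x.2.2
  have surjective : Function.Surjective T' := by
    rintro ⟨z, hz⟩
    obtain ⟨x, hx, rfl⟩ := hT z hz
    exact ⟨⟨x, hx, hz⟩, rfl⟩
  obtain ⟨C, hC, hpre⟩ := T'.exists_preimage_norm_le surjective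
  refine ⟨C, hC.le, fun z hz => ?_⟩
  obtain ⟨x, hxz, hx⟩ := hpre ⟨z, hz⟩
  exact ⟨x, x.2.1, congrArg Subtype.val hxz, hx⟩

/-- The vanishing `H^q_b(H; ℝ) = 0`. For `q = 0` this is the reduced group, since cochains on
`Fin 0 → H` are the augmentation. -/
def BoundedCohomologyVanishes (H : Type*) [Group H] (q : ℕ) : Prop :=
  ∀ c : (Fin (q + 1) → H) → ℝ, IsInvCochain c → IsBddFun c → gcoboundary c = 0 →
    ∃ b : (Fin q → H) → ℝ, IsInvCochain b ∧ IsBddFun b ∧ gcoboundary b = c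

/-- The Banach space `ℓ^∞(Hⁿ)` of bounded cochains. -/
abbrev BoundedCochain (H : Type*) (n : ℕ) := lp (fun _ : Fin n → H => ℝ) ⊤

lemma abs_boundedCochain_le {H : Type*} {n : ℕ} (f : BoundedCochain H n) (x : Fin n → H) :
    |f x| ≤ ‖f‖ :=
  lp.norm_apply_le_norm ENNReal.top_ne_zero f x

/-- A bounded function, as an element of the Banach space of bounded cochains. -/
def IsBddFun.toBoundedCochain {H : Type*} {n : ℕ} {c : (Fin n → H) → ℝ} (hc : IsBddFun c) :
    BoundedCochain H n :=
  ⟨c, memℓp_infty (hc.imp fun _ hC => Set.forall_mem_range.mpr hC)⟩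

variable (H : Type*) [Group H]

/-- The coboundary as a bounded operator. -/
noncomputable def boundedCoboundary (n : ℕ) : BoundedCochain H n →L[ℝ] BoundedCochain H (n + 1) :=
  LinearMap.mkContinuous
    { toFun f := IsBddFun.toBoundedCochain ⟨_, abs_gcoboundary_le (abs_boundedCochain_le f)⟩
      map_add' f g := lp.ext (gcoboundary_add f g)
      map_smul' r f := lp.ext (gcoboundary_smul r f) }
    (n + 1) fun f =>
      lp.norm_le_of_forall_le (by positivity) (abs_gcoboundary_le (abs_boundedCochain_le f))

/-- The closed subspace of invariant bounded cochains. -/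
noncomputable def invariantCochains (n : ℕ) : ClosedSubmodule ℝ (BoundedCochain H n) :=
  ⨅ (g : H) (x : Fin n → H),
    ClosedSubmodule.comap (lp.evalCLM ℝ (fun _ => ℝ) ⊤ (fun i => g * x i) - lp.evalCLM ℝ _ ⊤ x) ⊥

/-- The closed subspace of invariant bounded cocycles. -/
noncomputable def invariantCocycles (n : ℕ) : ClosedSubmodule ℝ (BoundedCochain H n) :=
  invariantCochains H n ⊓ ClosedSubmodule.comap (boundedCoboundary H n) ⊥

variable {H} {n q : ℕ}

lemma boundedCoboundary_eq_iff {f : BoundedCochain H n} {g : BoundedCochain H (n + 1)} :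
    boundedCoboundary H n f = g ↔ gcoboundary (f : (Fin n → H) → ℝ) = g :=
  Subtype.ext_iff

lemma mem_invariantCochains {f : BoundedCochain H n} :
    f ∈ invariantCochains H n ↔ IsInvCochain (f : (Fin n → H) → ℝ) := by
  simp only [invariantCochains, ClosedSubmodule.mem_iInf, ClosedSubmodule.mem_comap,
    ClosedSubmodule.mem_bot, sub_apply, sub_eq_zero]
  rfl

lemma mem_invariantCocycles {f : BoundedCochain H n} :
    f ∈ invariantCocycles H n ↔ IsInvCochain (f : (Fin n → H) → ℝ) ∧
      gcoboundary (f : (Fin n → H) → ℝ) = 0 :=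
  and_congr mem_invariantCochains boundedCoboundary_eq_iff

lemma boundedCohomologyVanishes_zero : BoundedCohomologyVanishes H 0 := by
  intro c hinv _ _
  refine ⟨fun _ => c fun _ => 1, fun _ _ => rfl, ⟨_, fun _ => le_rfl⟩, funext fun x => ?_⟩
  have hx : x = fun i => x 0 * 1 := funext fun i => by rw [mul_one, Fin.fin_one_eq_zero i]
  rw [hx, hinv (x 0) fun _ => 1]
  simp [gcoboundary]

lemma BoundedCohomologyVanishes.exists_primitive_le (hH : BoundedCohomologyVanishes H q) :
    ∃ C : ℝ, ∀ (c : (Fin (q + 1) → H) → ℝ) (M : ℝ), IsInvCochain c → (∀ x, |c x| ≤ M) →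
      gcoboundary c = 0 →
        ∃ b : (Fin q → H) → ℝ, IsInvCochain b ∧ (∀ x, |b x| ≤ C * M) ∧ gcoboundary b = c := by
  obtain ⟨C, hC, hpre⟩ := exists_preimage_mem_norm_le (boundedCoboundary H q)
    (invariantCochains H q) (invariantCocycles H (q + 1)) fun c hc => by
      obtain ⟨hinv, hcocycle⟩ := mem_invariantCocycles.mp hc
      obtain ⟨b, hb, hbdd, hbc⟩ := hH c hinv ⟨_, abs_boundedCochain_le c⟩ hcocycle
      exact ⟨hbdd.toBoundedCochain, mem_invariantCochains.mpr hb, boundedCoboundary_eq_iff.mpr hbc⟩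
  refine ⟨C, fun c M hinv hM hcocycle => ?_⟩
  have hbdd : IsBddFun c := ⟨M, hM⟩
  obtain ⟨b, hb, hbc, hle⟩ :=
    hpre hbdd.toBoundedCochain (mem_invariantCocycles.mpr ⟨hinv, hcocycle⟩)
  have norm_le : ‖hbdd.toBoundedCochain‖ ≤ M :=
    lp.norm_le_of_forall_le ((abs_nonneg _).trans (hM fun _ => 1)) hM
  exact ⟨b, mem_invariantCochains.mp hb, fun x => (abs_boundedCochain_le b x).trans
    (hle.trans (mul_le_mul_of_nonneg_left norm_le hC)), boundedCoboundary_eq_iff.mp hbc⟩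

end UniformPrimitives

section RowExactness

open ListCochain ListBicochain

variable {q : ℕ}

/-- Exactness of the complex of `Γ`-invariant cochains on `A` at simplices with `n` vertices, with
primitives bounded by a constant multiple of any bound for the cocycle. -/
def UniformlyExactAt (Γ A : Type*) [SMul Γ A] (n : ℕ) : Prop :=
  ∃ C : ℝ, ∀ (f : ListCochain A) (M : ℝ), f.IsInvariant Γ →
    (∀ y, y.length = n → |f y| ≤ M) → (∀ y, y.length = n + 1 → coboundary f y = 0) →
      ∃ g : ListCochain A, g.IsInvariant Γ ∧ (∀ y, y.length + 1 = n → |g y| ≤ C * M) ∧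
        ∀ y, y.length = n → coboundary g y = f y

lemma BoundedCohomologyVanishes.uniformlyExactAt {H : Type*} [Group H]
    (hH : BoundedCohomologyVanishes H q) : UniformlyExactAt H H (q + 1) := by
  obtain ⟨C, hprim⟩ := hH.exists_primitive_le
  refine ⟨C, fun f M hinv hM hf => ?_⟩
  obtain ⟨b, hb, hbM, hbf⟩ := hprim (f ∘ List.ofFn) M (isInvCochain_comp_ofFn hinv)
    (fun x => hM _ List.length_ofFn)
    (by rw [gcoboundary_comp_ofFn]; exact funext fun x => hf _ List.length_ofFn)
  refine ⟨toListCochain b, hb.isInvariant_toListCochain,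
    fun y hy => abs_toListCochain_le hbM (Nat.succ_injective hy), fun y hy => ?_⟩
  obtain ⟨x, rfl⟩ := exists_eq_ofFn hy
  rw [coboundary_toListCochain hy, hbf, toListCochain_ofFn, Function.comp_apply]

/-- A cocycle `f` on `A` is homologous to its pullback along `a ↦ ρ a • a₀`, which only depends on
the restriction of `f` to the orbit of `a₀`. -/
lemma UniformlyExactAt.of_equivariant {H A : Type*} [Group H] [MulAction H A]
    (hH : UniformlyExactAt H H (q + 1)) (a₀ : A) {ρ : A → H}
    (hρ : ∀ (h : H) (a : A), ρ (h • a) = h * ρ a) : UniformlyExactAt H A (q + 1) := by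
  obtain ⟨C, hprim⟩ := hH
  refine ⟨C + q, fun f M hinv hM hf => ?_⟩
  obtain ⟨b, hb, hbM, hbf⟩ := hprim (fun l => f (l.map (· • a₀))) M
    (fun h l => by
      refine Eq.trans ?_ (hinv h (l.map (· • a₀)))
      simp only [List.map_map, Function.comp_def, smul_eq_mul, mul_smul])
    (fun y hy => hM _ (by rwa [List.length_map]))
    (fun y hy => by rw [← coboundary_map]; exact hf _ (by rwa [List.length_map]))
  have hπ (h : H) (a : A) : ρ (h • a) • a₀ = h • ρ a • a₀ := by rw [hρ, mul_smul]
  refine ⟨fun y => b (y.map ρ) + prism (fun a => ρ a • a₀) (join id f) y, ?_, ?_, ?_⟩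
  · intro h y
    refine congrArg₂ (· + ·) ?_
      (isInvariant_prism (isInvariant_join hinv fun _ _ => rfl) hπ h y)
    rw [← hb h (y.map ρ), List.map_map, List.map_map]
    simp only [Function.comp_def, hρ, smul_eq_mul]
  · intro y hy
    rw [add_mul]
    refine (abs_add_le _ _).trans (add_le_add (hbM _ (by rwa [List.length_map])) ?_)
    rw [← Nat.succ_injective hy]
    exact abs_prism_le _ fun x w hxw => hM _ (by simp; lia)
  · intro y hy
    have homotopy := coboundary_prism_add_prism_totalCoboundary (fun a => ρ a • a₀) (join id f) y
    rw [prism_eq_zero _ fun x w hxw => (totalCoboundary_join id f x w).trans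
      (hf _ (by simp; lia))] at homotopy
    rw [coboundary_add, ← coboundary_map, hbf _ (by rwa [List.length_map]), List.map_map]
    simp only [join, List.map_id, List.nil_append, List.map_nil, List.append_nil] at homotopy
    simp only [Function.comp_def]
    linarith

variable {G : Type*} [Group G] {K : Subgroup G}

lemma exists_equivariant_retraction (K : Subgroup G) :
    ∃ ρ : G → K, ∀ (k : K) (g : G), ρ (k • g) = k * ρ g := by
  obtain ⟨T, hT, -⟩ := K.exists_isComplement_right 1
  exact ⟨fun g => (hT.equiv g).1, fun k g => congrArg Prod.fst (hT.equiv_mul_left k g)⟩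

lemma uniformlyExactAt_subgroup (hK : ∀ r < q, BoundedCohomologyVanishes K r) :
    UniformlyExactAt K G q := by
  rcases q with _ | q
  · refine ⟨0, fun f M _ _ hf => ⟨fun _ => 0, fun _ _ => rfl, by simp, fun y hy => ?_⟩⟩
    obtain rfl := List.length_eq_zero_iff.mp hy
    simpa [coboundary] using (hf [1] rfl).symm
  · obtain ⟨ρ, hρ⟩ := exists_equivariant_retraction K
    exact (hK q q.lt_succ_self).uniformlyExactAt.of_equivariant (1 : G) hρ

/-- Induction from `K` to `G`: the double cochain whose slice at the first coset `gK` is the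
translate of `γ` by `g`. Slices at different representatives agree if `γ` is `K`-invariant. -/
noncomputable def inducedBicochain (γ : ListBicochain (G ⧸ K) G) : ListBicochain (G ⧸ K) G
  | [], _ => 0
  | s :: x, y => γ (x.map (s.out⁻¹ • ·)) (y.map (s.out⁻¹ • ·))

lemma isInvariant_inducedBicochain {γ : ListBicochain (G ⧸ K) G} (hγ : γ.IsInvariant K) :
    (inducedBicochain γ).IsInvariant G := by
  rintro g (_ | ⟨s, x⟩) y
  · rfl
  have hmem : (g • s).out⁻¹ * (g * s.out) ∈ K := by
    rw [← QuotientGroup.eq, QuotientGroup.out_eq', ← smul_eq_mul]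
    exact (MulAction.Quotient.coe_smul_out K g s).symm
  have factor : (g • s).out⁻¹ * g = (g • s).out⁻¹ * (g * s.out) * s.out⁻¹ := by group
  refine Eq.trans ?_ (hγ ⟨_, hmem⟩ (x.map (s.out⁻¹ • ·)) (y.map (s.out⁻¹ • ·)))
  simp only [List.map_cons, inducedBicochain, List.map_map, Function.comp_def, smul_smul, factor]
  simp only [mul_smul _ s.out⁻¹]
  rfl

lemma coboundary_inducedBicochain (γ : ListBicochain (G ⧸ K) G) (s : G ⧸ K) (x : List (G ⧸ K))
    (y : List G) : coboundary (inducedBicochain γ (s :: x)) y =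
      coboundary (γ (x.map (s.out⁻¹ • ·))) (y.map (s.out⁻¹ • ·)) :=
  (coboundary_map _ _ y).symm

lemma smul_quotient_eq_self [K.Normal] (k : K) (s : G ⧸ K) : k • s = s := by
  obtain ⟨g, rfl⟩ := QuotientGroup.mk_surjective s
  change ((k * g : G) : G ⧸ K) = g
  rw [QuotientGroup.mk_mul, (QuotientGroup.eq_one_iff _).mpr k.2, one_mul]

lemma exists_row_primitive [K.Normal] {p : ℕ} (hK : UniformlyExactAt K G q)
    {f : ListBicochain (G ⧸ K) G} (hinv : f.IsInvariant G) {M : ℝ}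
    (hM : ∀ x y, x.length = p + 1 → y.length = q → |f x y| ≤ M)
    (hf : ∀ x y, x.length = p + 1 → y.length = q + 1 → coboundary (f x) y = 0) :
    ∃ g : ListBicochain (G ⧸ K) G, g.IsInvariant G ∧
      (∃ C, ∀ x y, x.length = p + 1 → y.length + 1 = q → |g x y| ≤ C) ∧
      ∀ x y, x.length = p + 1 → y.length = q → coboundary (g x) y = f x y := by
  have map_smul_eq (k : K) (x : List (G ⧸ K)) : x.map (k • ·) = x := by
    simp only [smul_quotient_eq_self, List.map_id']
  have slice_invariant (x : List (G ⧸ K)) : ListCochain.IsInvariant K (f x) := by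
    intro k y
    rw [← hinv k x y]
    exact congrArg (f · _) (map_smul_eq k x).symm
  obtain ⟨C, hprim⟩ := hK
  have exists_slice (x : List (G ⧸ K)) : ∃ γ : ListCochain G, γ.IsInvariant K ∧
      (x.length = p → (∀ y, y.length + 1 = q → |γ y| ≤ C * M) ∧
        ∀ y, y.length = q → coboundary γ y = f (1 :: x) y) := by
    by_cases hx : x.length = p
    · obtain ⟨γ, hγ, h⟩ := hprim (f (1 :: x)) M (slice_invariant _)
        (fun y => hM _ y (congrArg (· + 1) hx)) (fun y => hf _ y (congrArg (· + 1) hx))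
      exact ⟨γ, hγ, fun _ => h⟩
    · exact ⟨fun _ => 0, fun _ _ => rfl, fun h => absurd h hx⟩
  choose γ hγ hγprim using exists_slice
  have hγK : ListBicochain.IsInvariant K γ := fun k x y => by rw [map_smul_eq, hγ]
  refine ⟨inducedBicochain γ, isInvariant_inducedBicochain hγK, ⟨C * M, ?_⟩, ?_⟩
  · rintro (_ | ⟨s, x⟩) y hx hy
    · contradiction
    · exact (hγprim _ (by simpa using hx)).1 _ (by simpa using hy)
  · rintro (_ | ⟨s, x⟩) y hx hy
    · contradiction
    have hs : s.out⁻¹ • s = (1 : G ⧸ K) := by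
      nth_rw 2 [← QuotientGroup.out_eq' s]
      exact congrArg QuotientGroup.mk (inv_mul_cancel s.out)
    rw [coboundary_inducedBicochain, (hγprim _ (by simpa using hx)).2 _ (by simpa using hy),
      ← hinv s.out⁻¹ (s :: x) y, List.map_cons, hs]

end RowExactness

section Zigzag

open ListCochain ListBicochain

namespace ListBicochain

variable {A B : Type*}

lemma totalCoboundary_congr {f g : ListBicochain B A} {x : List B}
    (h : ∀ w : List B, w.length ≤ x.length → f w = g w) (y : List A) :
    totalCoboundary f x y = totalCoboundary g x y := by
  rw [totalCoboundary_eq, totalCoboundary_eq, h x le_rfl,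
    coboundary_congr fun w hw => congrFun (h w (by lia)) y]

/-- The value which the coboundary of the row of `β` at `x` must take in order for `β` to be a
primitive of `Φ` at `x`, in terms of the rows at the faces of `x`. -/
noncomputable def obstruction (Φ β : ListBicochain B A) : ListBicochain B A :=
  fun x y => (-1) ^ x.length * (Φ x y - coboundary (fun w => β w y) x)

lemma totalCoboundary_eq_iff {Φ β : ListBicochain B A} {x : List B} {y : List A} :
    totalCoboundary β x y = Φ x y ↔ coboundary (β x) y = obstruction Φ β x y := by
  rw [totalCoboundary_eq, obstruction]
  rcases neg_one_pow_eq_or ℝ x.length with sign | sign <;> rw [sign] <;>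
    constructor <;> intro h <;> linarith

lemma coboundary_obstruction {Φ β : ListBicochain B A} {x : List B} {y : List A}
    (hΦ : totalCoboundary Φ x y = 0)
    (hβ : ∀ w : List B, w.length + 1 = x.length → totalCoboundary β w y = Φ w y) :
    coboundary (obstruction Φ β x) y = 0 := by
  have faces : coboundary (fun w => coboundary (β w) y) x =
      -(-1) ^ x.length * coboundary (fun w => Φ w y) x := calc
    _ = coboundary (fun w => -(-1) ^ x.length *
          (Φ w y - coboundary (fun v => β v y) w)) x := coboundary_congr fun w hw => by
        rw [totalCoboundary_eq_iff.mp (hβ w hw), obstruction, ← hw, pow_succ, mul_neg_one, neg_neg]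
    _ = _ := by rw [coboundary_const_mul, coboundary_sub, coboundary_coboundary, sub_zero]
  have expansion : coboundary (obstruction Φ β x) y =
      (-1) ^ x.length * (coboundary (Φ x) y - coboundary (fun w => coboundary (β w) y) x) := by
    rw [← coboundary_comm, ← coboundary_sub, ← coboundary_const_mul]
    rfl
  rw [totalCoboundary_eq] at hΦ
  rw [expansion, faces]
  rcases neg_one_pow_eq_or ℝ x.length with sign | sign <;> rw [sign] at hΦ ⊢ <;> linarith

lemma isInvariant_obstruction {Γ : Type*} [SMul Γ A] [SMul Γ B] {Φ β : ListBicochain B A}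
    (hΦ : Φ.IsInvariant Γ) (hβ : β.IsInvariant Γ) : (obstruction Φ β).IsInvariant Γ := by
  intro g x y
  rw [obstruction, List.length_map, hΦ g x y, coboundary_map,
    coboundary_congr fun w _ => hβ g w y, obstruction]

/-- Boundedness on all pairs of simplices with `n` vertices in total. -/
def IsBoundedInDegree (n : ℕ) (f : ListBicochain B A) : Prop :=
  ∃ C, ∀ x y, x.length + y.length = n → |f x y| ≤ C

/-- `β` is a bounded invariant primitive of `Φ` in total degree `m + 1`, as far as simplices over
`B` with at most `p` vertices are concerned. -/
structure IsPrimitiveUpTo (Γ : Type*) [SMul Γ A] [SMul Γ B] (Φ : ListBicochain B A) (m p : ℕ)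
    (β : ListBicochain B A) : Prop where
  invariant : β.IsInvariant Γ
  bounded : β.IsBoundedInDegree m
  eq : ∀ x y, x.length ≤ p → x.length + y.length = m + 1 → totalCoboundary β x y = Φ x y

lemma isPrimitiveUpTo_zero {Γ : Type*} [SMul Γ A] [SMul Γ B] {Φ : ListBicochain B A} {m : ℕ}
    {b : ListCochain A} (hb : b.IsInvariant Γ) {C : ℝ} (hbC : ∀ y, y.length = m → |b y| ≤ C)
    (hbΦ : ∀ y, y.length = m + 1 → coboundary b y = Φ [] y) :
    IsPrimitiveUpTo Γ Φ m 0 fun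
      | [], y => b y
      | _ :: _, _ => 0 where
  invariant
    | g, [], y => hb g y
    | _, _ :: _, _ => rfl
  bounded := ⟨max C 0, fun
    | [], y, hy => (hbC y (by simpa using hy)).trans (le_max_left _ _)
    | _ :: _, _, _ => by simp⟩
  eq x y hx hxy := by
    obtain rfl := List.length_eq_zero_iff.mp (Nat.le_zero.mp hx)
    exact hbΦ y (by simpa using hxy)

end ListBicochain

variable {G : Type*} [Group G] {K : Subgroup G} [K.Normal] {m : ℕ}
  {Φ : ListBicochain (G ⧸ K) G}

lemma ListBicochain.IsPrimitiveUpTo.exists_succ {p q : ℕ} {β : ListBicochain (G ⧸ K) G}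
    (hK : UniformlyExactAt K G q) (hβ : IsPrimitiveUpTo G Φ (p + q) p β) (hΦ : Φ.IsInvariant G)
    (hΦbdd : Φ.IsBoundedInDegree (p + q + 1))
    (hΦclosed : ∀ x y, x.length + y.length = p + q + 2 → totalCoboundary Φ x y = 0) :
    ∃ β', IsPrimitiveUpTo G Φ (p + q) (p + 1) β' ∧ β' [] = β [] := by
  obtain ⟨CΦ, hCΦ⟩ := hΦbdd
  obtain ⟨Cβ, hCβ⟩ := hβ.bounded
  obtain ⟨g, hg, ⟨Cg, hCg⟩, hgprim⟩ := exists_row_primitive (p := p) hK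
    (isInvariant_obstruction hΦ hβ.invariant) (M := CΦ + (p + 1 : ℕ) * Cβ)
    (fun x y hx hy => by
      rw [obstruction, abs_mul, abs_neg_one_pow, one_mul, ← hx]
      exact (abs_sub _ _).trans (add_le_add (hCΦ x y (by lia))
        (abs_coboundary_le fun w _ => hCβ w y (by lia))))
    (fun x y hx hy => coboundary_obstruction (hΦclosed x y (by lia))
      fun w _ => hβ.eq w y (by lia) (by lia))
  let β' : ListBicochain (G ⧸ K) G := fun x => if x.length = p + 1 then g x else β x
  have β'_new {x : List (G ⧸ K)} (hx : x.length = p + 1) : β' x = g x := if_pos hx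
  have β'_old {x : List (G ⧸ K)} (hx : x.length ≠ p + 1) : β' x = β x := if_neg hx
  refine ⟨β', ⟨fun h x y => ?_, ⟨max Cg Cβ, fun x y hxy => ?_⟩, fun x y hx hxy => ?_⟩,
    β'_old (by simp)⟩
  · by_cases hx : x.length = p + 1
    · rw [β'_new hx, β'_new (by rwa [List.length_map]), hg]
    · rw [β'_old hx, β'_old (by rwa [List.length_map]), hβ.invariant]
  · by_cases hx : x.length = p + 1
    · exact β'_new hx ▸ (hCg x y hx (by lia)).trans (le_max_left _ _)
    · exact β'_old hx ▸ (hCβ x y hxy).trans (le_max_right _ _)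
  · rcases hx.lt_or_eq with hx | hx
    · rw [totalCoboundary_congr fun w _ => β'_old (by lia), hβ.eq x y (by lia) hxy]
    · rw [totalCoboundary_eq_iff, β'_new hx, hgprim x y hx (by lia), obstruction, obstruction,
        coboundary_congr fun w _ => congrFun (β'_old (by lia)).symm y]

lemma exists_totalCoboundary_primitive (hK : ∀ q ≤ m, UniformlyExactAt K G q)
    (hΦ : Φ.IsInvariant G) (hΦbdd : Φ.IsBoundedInDegree (m + 1))
    (hΦclosed : ∀ x y, x.length + y.length = m + 2 → totalCoboundary Φ x y = 0)
    {b : ListCochain G} (hb : b.IsInvariant G) {C : ℝ} (hbC : ∀ y, y.length = m → |b y| ≤ C)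
    (hbΦ : ∀ y, y.length = m + 1 → coboundary b y = Φ [] y) :
    ∃ β : ListBicochain (G ⧸ K) G, β.IsInvariant G ∧ β.IsBoundedInDegree m ∧ β [] = b ∧
      ∀ x y, x.length + y.length = m + 1 → totalCoboundary β x y = Φ x y := by
  have zigzag (p : ℕ) (hp : p ≤ m + 1) : ∃ β, IsPrimitiveUpTo G Φ m p β ∧ β [] = b := by
    induction p with
    | zero => exact ⟨_, isPrimitiveUpTo_zero hb hbC hbΦ, rfl⟩
    | succ p ih =>
      obtain ⟨β, hβ, hβb⟩ := ih (by lia)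
      obtain ⟨q, rfl⟩ := Nat.exists_eq_add_of_le (Nat.le_of_succ_le_succ hp)
      obtain ⟨β', hβ', hβ'β⟩ := hβ.exists_succ (hK q (by lia)) hΦ hΦbdd hΦclosed
      exact ⟨β', hβ', hβ'β.trans hβb⟩
  obtain ⟨β, hβ, hβb⟩ := zigzag (m + 1) le_rfl
  exact ⟨β, hβ.invariant, hβ.bounded, hβb, fun x y hxy => hβ.eq x y (by lia) hxy⟩

end Zigzag

section Inflation

open ListCochain ListBicochain

variable {G : Type*} [Group G] (K : Subgroup G) [K.Normal] (n : ℕ)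

/-- Injectivity of the inflation map `H^n_b(G/K; ℝ) → H^n_b(G; ℝ)`. -/
def InflationInjective : Prop :=
  ∀ c : (Fin (n + 1) → G ⧸ K) → ℝ, IsInvCochain c → IsBddFun c → gcoboundary c = 0 →
    (∃ b : (Fin n → G) → ℝ, IsInvCochain b ∧ IsBddFun b ∧ gcoboundary b = inflate K c) →
      ∃ b' : (Fin n → G ⧸ K) → ℝ, IsInvCochain b' ∧ IsBddFun b' ∧ gcoboundary b' = c

/-- Surjectivity of the inflation map `H^n_b(G/K; ℝ) → H^n_b(G; ℝ)`. -/
def InflationSurjective : Prop :=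
  ∀ c : (Fin (n + 1) → G) → ℝ, IsInvCochain c → IsBddFun c → gcoboundary c = 0 →
    ∃ c' : (Fin (n + 1) → G ⧸ K) → ℝ, IsInvCochain c' ∧ IsBddFun c' ∧ gcoboundary c' = 0 ∧
      ∃ b : (Fin n → G) → ℝ, IsInvCochain b ∧ IsBddFun b ∧ c = inflate K c' + gcoboundary b

variable {K n}

lemma isInvariant_quotient {f : ListCochain (G ⧸ K)} (hf : f.IsInvariant G) :
    f.IsInvariant (G ⧸ K) := by
  intro s l
  obtain ⟨g, rfl⟩ := QuotientGroup.mk_surjective s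
  exact hf g l

lemma IsInvCochain.isInvariant_toListCochain_quotient {c : (Fin n → G ⧸ K) → ℝ}
    (hc : IsInvCochain c) : (toListCochain c).IsInvariant G :=
  fun g => hc.isInvariant_toListCochain (g : G ⧸ K)

lemma ListBicochain.IsInvariant.isInvCochain_edge {β : ListBicochain (G ⧸ K) G}
    (hβ : β.IsInvariant G) : IsInvCochain ((fun x => β x []) ∘ List.ofFn (n := n)) :=
  isInvCochain_comp_ofFn (isInvariant_quotient fun g x => hβ g x [])

lemma ListBicochain.IsBoundedInDegree.isBddFun_edge {A B : Type*} {β : ListBicochain B A}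
    (hβ : β.IsBoundedInDegree n) : IsBddFun ((fun x => β x []) ∘ List.ofFn (n := n)) :=
  hβ.imp fun _ hC x => hC (List.ofFn x) [] (by simp)

lemma inflate_apply (c : (Fin n → G ⧸ K) → ℝ) (x : Fin n → G) :
    inflate K c x = toListCochain c ((List.ofFn x).map QuotientGroup.mk) := by
  rw [List.map_ofFn, toListCochain_ofFn]
  rfl

lemma coboundary_toListCochain_of_cocycle {H : Type*} [Group H] {c : (Fin n → H) → ℝ}
    (hc : gcoboundary c = 0) {l : List H} (hl : l.length = n + 1) :
    coboundary (toListCochain c) l = 0 := by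
  obtain ⟨x, rfl⟩ := exists_eq_ofFn hl
  rw [coboundary_toListCochain hl, hc, toListCochain_ofFn, Pi.zero_apply]

lemma inflationInjective_of_uniformlyExactAt (hK : ∀ q ≤ n, UniformlyExactAt K G q) :
    InflationInjective K n := by
  rintro c hc ⟨C, hC⟩ hcocycle ⟨b, hb, ⟨Cb, hCb⟩, hbc⟩
  obtain ⟨β, hβ, hβbdd, -, hβc⟩ := exists_totalCoboundary_primitive hK
    (Φ := join QuotientGroup.mk (toListCochain c))
    (isInvariant_join hc.isInvariant_toListCochain_quotient fun _ _ => rfl)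
    ⟨C, fun x y hxy => abs_toListCochain_le hC (by simpa using hxy)⟩
    (fun x y hxy => (totalCoboundary_join _ _ x y).trans
      (coboundary_toListCochain_of_cocycle hcocycle (by simpa using hxy)))
    hb.isInvariant_toListCochain (fun y hy => abs_toListCochain_le hCb hy)
    (fun y hy => by
      obtain ⟨x, rfl⟩ := exists_eq_ofFn hy
      rw [coboundary_toListCochain hy, hbc, toListCochain_ofFn, inflate_apply]
      rfl)
  refine ⟨_, hβ.isInvCochain_edge, hβbdd.isBddFun_edge, ?_⟩
  rw [gcoboundary_comp_ofFn]
  funext x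
  rw [Function.comp_apply, ← totalCoboundary_nil_right, hβc _ _ (by simp), join, List.map_nil,
    List.append_nil, toListCochain_ofFn]

lemma inflationSurjective_of_uniformlyExactAt (hK : ∀ q ≤ n + 1, UniformlyExactAt K G q) :
    InflationSurjective K n := by
  rintro c hc ⟨C, hC⟩ hcocycle
  obtain ⟨β, hβ, ⟨Cβ, hCβ⟩, hβc, hβ0⟩ := exists_totalCoboundary_primitive hK (Φ := fun _ _ => 0)
    (fun _ _ _ => rfl) ⟨0, fun _ _ _ => abs_zero.le⟩ (fun x y _ => totalCoboundary_zero x y)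
    hc.isInvariant_toListCochain (fun y hy => abs_toListCochain_le hC hy)
    (fun y hy => coboundary_toListCochain_of_cocycle hcocycle hy)
  refine ⟨_, hβ.isInvCochain_edge, IsBoundedInDegree.isBddFun_edge ⟨Cβ, hCβ⟩, ?_,
    prism QuotientGroup.mk β ∘ List.ofFn,
    isInvCochain_comp_ofFn (isInvariant_prism hβ fun _ _ => rfl),
    ⟨n * Cβ, fun x => ?_⟩, ?_⟩
  · rw [gcoboundary_comp_ofFn]
    funext x
    rw [Function.comp_apply, ← totalCoboundary_nil_right, hβ0 _ _ (by simp), Pi.zero_apply]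
  · simpa using abs_prism_le QuotientGroup.mk (y := List.ofFn x) fun v w hvw =>
      hCβ v w (by simpa using hvw)
  · funext x
    have homotopy :=
      coboundary_prism_add_prism_totalCoboundary QuotientGroup.mk β (List.ofFn x)
    rw [prism_eq_zero _ fun v w hvw => hβ0 v w (by simpa using hvw), hβc, toListCochain_ofFn]
      at homotopy
    rw [gcoboundary_comp_ofFn, Pi.add_apply, Function.comp_apply, inflate, Function.comp_apply,
      ← Function.comp_def, ← List.map_ofFn]
    linarith

theorem inflation_iso_of_boundedly_acyclic_kernel_general {G : Type*} [Group G]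
    (K : Subgroup G) [K.Normal] (N : ℕ∞)
    (hK : ∀ q : ℕ, 0 < q → (q : ℕ∞) < N → BoundedCohomologyVanishes K q) :
    (∀ n : ℕ, (n : ℕ∞) ≤ N → InflationInjective K n) ∧
      ∀ n : ℕ, (n : ℕ∞) < N → InflationSurjective K n := by
  have vanishing (q : ℕ) (hq : (q : ℕ∞) < N) : BoundedCohomologyVanishes K q :=
    q.eq_zero_or_pos.elim (fun h => h ▸ boundedCohomologyVanishes_zero) fun h => hK q h hq
  have rows (q : ℕ) (hq : (q : ℕ∞) ≤ N) : UniformlyExactAt K G q :=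
    uniformlyExactAt_subgroup fun r hr => vanishing r ((Nat.cast_lt.mpr hr).trans_le hq)
  refine ⟨fun n hn => inflationInjective_of_uniformlyExactAt fun q hq =>
      rows q ((Nat.cast_le.mpr hq).trans hn),
    fun n hn => inflationSurjective_of_uniformlyExactAt fun q hq =>
      rows q ((Nat.cast_le.mpr hq).trans ?_)⟩
  exact_mod_cast Order.add_one_le_of_lt hn

end Inflation

/-- if `K ⊴ G` and `H^q_b(K;ℝ) = 0` for all `0 < q < N`, then the inflation
map `H^n_b(G/K;ℝ) → H^n_b(G;ℝ)` is an isomorphism for all `0 ≤ n < N`: it is injective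
(an inflated bounded invariant cocycle that is a bounded coboundary over `G` is already a
bounded coboundary over `G/K`) and surjective (every bounded invariant cocycle of `G` is,
up to a bounded invariant coboundary, inflated from `G/K`). -/
theorem inflation_iso_of_boundedly_acyclic_kernel {G : Type*} [Group G]
    (K : Subgroup G) [K.Normal] (N : ℕ∞)
    (hK : ∀ q : ℕ, 0 < q → (q : ℕ∞) < N →
      ∀ c : (Fin (q + 1) → K) → ℝ, IsInvCochain c → IsBddFun c → gcoboundary c = 0 →
        ∃ b : (Fin q → K) → ℝ, IsInvCochain b ∧ IsBddFun b ∧ gcoboundary b = c) :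
    ∀ n : ℕ, (n : ℕ∞) < N →
      -- injectivity of inflation on `H^n_b`
      ((∀ c : (Fin (n + 1) → G ⧸ K) → ℝ, IsInvCochain c → IsBddFun c → gcoboundary c = 0 →
        (∃ b : (Fin n → G) → ℝ, IsInvCochain b ∧ IsBddFun b ∧ gcoboundary b = inflate K c) →
        (∃ b' : (Fin n → G ⧸ K) → ℝ, IsInvCochain b' ∧ IsBddFun b' ∧ gcoboundary b' = c)) ∧
      -- surjectivity of inflation on `H^n_b`
      (∀ c : (Fin (n + 1) → G) → ℝ, IsInvCochain c → IsBddFun c → gcoboundary c = 0 →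
        ∃ c' : (Fin (n + 1) → G ⧸ K) → ℝ, IsInvCochain c' ∧ IsBddFun c' ∧
          gcoboundary c' = 0 ∧
          ∃ b : (Fin n → G) → ℝ, IsInvCochain b ∧ IsBddFun b ∧
            c = inflate K c' + gcoboundary b)) := by
  obtain ⟨injective, surjective⟩ := inflation_iso_of_boundedly_acyclic_kernel_general K N hK
  exact fun n hn => ⟨injective n hn.le, surjective n hn⟩
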